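/- Fix a prime ℓ, positive integers e, r, n with r | e. Let I_d = (Z/eZ) × {(d,j) : 0 ≤ j < ℓ^d} with Z/rZ acting by translation on the first coordinate, and I = ⋃_{d≥0} I_d. Let L be the set of e-tuples of partitions of total size n, with Z/rZ acting by cyclically shifting indices (through the embedding Z/rZ → Z/eZ), and let W be the set of functions w : I → {ℓ-core partitions} with Σ_{(i,d,j)} ℓ^d |w(i,d,j)| = n, with Z/rZ acting via i'·w(i,d,j) = w(i+i',d,j). Then W and L are isomorphic as Z/rZ-sets. -/

import Mathlib

/-- The hook length of the cell `(i, j)` of a Young diagram. -/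
def hookLength (Y : YoungDiagram) (i j : ℕ) : ℕ :=
  Y.rowLen i + Y.colLen j - i - j - 1

/-- A Young diagram (partition) is an `ℓ`-core if it has no hook of length `ℓ`. -/
def IsLCore (ℓ : ℕ) (Y : YoungDiagram) : Prop :=
  ∀ c ∈ Y.cells, hookLength Y c.1 c.2 ≠ ℓ

/-- The index set `I = ⋃_{d ≥ 0} I_d` where `I_d = (ℤ/e) × {(d, j) ∣ 0 ≤ j < ℓ^d}`. -/
abbrev WIndex (ℓ e : ℕ) : Type := ZMod e × ((d : ℕ) × Fin (ℓ ^ d))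

/-- The embedding `ℤ/r → ℤ/e` (for `r ∣ e`), sending `k` to `k·(e/r)`. -/
def embed (e r : ℕ) (k : ZMod r) : ZMod e := ((k.val * (e / r) : ℕ) : ZMod e)

/-- The set `L` of `e`-tuples of partitions of total size `n`. -/
def Lset (e n : ℕ) : Set (ZMod e → YoungDiagram) :=
  {lam | ∑ᶠ i, (lam i).card = n}

/-- The set `W` of functions `w : I → {ℓ-cores}` with `∑ ℓ^d |w(i,d,j)| = n`. -/
def Wset (ℓ e n : ℕ) : Set (WIndex ℓ e → YoungDiagram) :=
  {w | (∀ x, IsLCore ℓ (w x)) ∧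
    (Function.support fun x => (w x).card).Finite ∧
    ∑ᶠ x : WIndex ℓ e, ℓ ^ x.2.1 * (w x).card = n}

/-- The shift action of `k ∈ ℤ/r` on `e`-tuples of partitions. -/
def shiftL (e r : ℕ) (k : ZMod r) (lam : ZMod e → YoungDiagram) :
    ZMod e → YoungDiagram :=
  fun i => lam (i + embed e r k)

/-- The shift action of `k ∈ ℤ/r` on functions `I → {partitions}`. -/
def shiftW (ℓ e r : ℕ) (k : ZMod r) (w : WIndex ℓ e → YoungDiagram) :
    WIndex ℓ e → YoungDiagram :=
  fun x => w (x.1 + embed e r k, x.2)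

/-!
A partition with a charge `c : ℤ` is the same as a Maya diagram, the set of its bead
positions `c + λᵢ - i - 1`. Hooks of length `ℓ` are the pairs of a bead at `s` and a gap at
`s - ℓ`. Cutting `ℤ` into residue classes modulo `ℓ` (the runners of the abacus) turns one Maya
diagram into `ℓ` arbitrary ones: the partitions on the runners form the `ℓ`-quotient, and the
charges of the runners, whose sum is `c`, determine the `ℓ`-core. The normalised sum of
`2 * s + 1` over the beads `s` is `2 * |λ| + c ^ 2`; computing it runner by runner gives
`|λ| = |core| + ℓ * ∑ |quotient|`. As `ℓ ≥ 2`, the components of the quotient of a nonempty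
partition are smaller than the partition, so iterating the decomposition ends after finitely
many steps and yields the tower of cores. All of this happens in each component of a tuple
separately, hence commutes with permuting the components.
-/

/-- The `i`-th bead `c + λᵢ - i - 1` (`i ≥ 0`) of the partition `p.2 = λ` placed on the
line `ℤ` with charge `p.1 = c`. -/
def bead (p : ℤ × YoungDiagram) (i : ℕ) : ℤ := p.1 + p.2.rowLen i - i - 1

/-- The Maya diagram (set of bead positions) of a charged partition. -/
def beadSet (p : ℤ × YoungDiagram) : Set ℤ := Set.range (bead p)

/-- The `j`-th empty position `c + j - λ'ⱼ` of a charged partition: the one whose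
column of `λ` is the `j`-th. -/
def gap (p : ℤ × YoungDiagram) (j : ℕ) : ℤ := p.1 + j - p.2.colLen j

/-- A Maya diagram: a set of integers containing all sufficiently small integers and no
sufficiently large one. -/
def IsMaya (S : Set ℤ) : Prop := BddAbove S ∧ BddBelow Sᶜ

section YoungDiagrams

open Finset

theorem lt_rowLen_iff_lt_colLen (Y : YoungDiagram) (i j : ℕ) :
    j < Y.rowLen i ↔ i < Y.colLen j := by
  rw [← YoungDiagram.mem_iff_lt_rowLen, YoungDiagram.mem_iff_lt_colLen]

theorem rowLen_eq_zero_of_colLen_zero_le {Y : YoungDiagram} {i : ℕ} (h : Y.colLen 0 ≤ i) :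
    Y.rowLen i = 0 := by
  have := lt_rowLen_iff_lt_colLen Y i 0
  omega

theorem rowLen_bot (i : ℕ) : (⊥ : YoungDiagram).rowLen i = 0 := by
  have := YoungDiagram.notMem_bot (i, 0)
  rwa [YoungDiagram.mem_iff_lt_rowLen, not_lt, Nat.le_zero] at this

theorem rowLen_injective : Function.Injective YoungDiagram.rowLen := by
  refine fun Y Z h => YoungDiagram.ext (Finset.ext fun ⟨i, j⟩ => ?_)
  simp only [YoungDiagram.mem_cells, YoungDiagram.mem_iff_lt_rowLen, h]

theorem exists_rowLen_eq {f : ℕ → ℕ} (hf : Antitone f) {n : ℕ} (hn : f n = 0) :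
    ∃ Y : YoungDiagram, Y.rowLen = f := by
  have hsorted : ((List.range n).map f).SortedGE :=
    (List.pairwise_map.2 (List.pairwise_le_range.imp fun h => hf h)).sortedGE
  refine ⟨YoungDiagram.ofRowLens _ hsorted, funext fun i => eq_of_forall_lt_iff fun j => ?_⟩
  rw [← YoungDiagram.mem_iff_lt_rowLen, YoungDiagram.mem_ofRowLens]
  simp only [List.length_map, List.length_range, List.getElem_map, List.getElem_range,
    exists_prop, and_iff_right_iff_imp]
  intro hj
  by_contra! hi
  have := hf hi
  omega

theorem card_eq_sum_rowLen (Y : YoungDiagram) : Y.card = ∑ i ∈ range (Y.colLen 0), Y.rowLen i := by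
  have hmaps : ∀ c ∈ Y.cells, c.1 ∈ range (Y.colLen 0) := fun c hc =>
    mem_range.2 (YoungDiagram.mem_iff_lt_colLen.1
      (Y.up_left_mem le_rfl (Nat.zero_le c.2) ((Y.mem_cells c).1 hc)))
  simp_rw [YoungDiagram.rowLen_eq_card]
  exact card_eq_sum_card_fiberwise hmaps

theorem card_eq_zero_iff {Y : YoungDiagram} : Y.card = 0 ↔ Y = ⊥ := by
  rw [YoungDiagram.card, Finset.card_eq_zero, YoungDiagram.ext_iff, YoungDiagram.cells_bot]

end YoungDiagrams

section Beads

theorem bead_strictAnti (p : ℤ × YoungDiagram) : StrictAnti (bead p) := by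
  intro i k hik
  have := p.2.rowLen_anti i k hik.le
  unfold bead
  omega

theorem bead_of_colLen_zero_le {p : ℤ × YoungDiagram} {i : ℕ} (h : p.2.colLen 0 ≤ i) :
    bead p i = p.1 - i - 1 := by
  simp [bead, rowLen_eq_zero_of_colLen_zero_le h]

theorem gap_lt_bead_iff (p : ℤ × YoungDiagram) (i j : ℕ) :
    gap p j < bead p i ↔ (i, j) ∈ p.2 := by
  have := lt_rowLen_iff_lt_colLen p.2 i j
  rw [YoungDiagram.mem_iff_lt_rowLen]
  unfold gap bead
  omega

theorem gap_notMem_beadSet (p : ℤ × YoungDiagram) (j : ℕ) : gap p j ∉ beadSet p := by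
  rintro ⟨i, hi⟩
  have := lt_rowLen_iff_lt_colLen p.2 i j
  unfold gap bead at hi
  omega

theorem exists_gap_eq {p : ℤ × YoungDiagram} {t : ℤ} (ht : t ∉ beadSet p) :
    ∃ j, gap p j = t := by
  classical
  have hbelow : ∃ i, bead p i < t := by
    refine ⟨p.2.colLen 0 + (p.1 - t).toNat, ?_⟩
    rw [bead_of_colLen_zero_le (Nat.le_add_right _ _)]
    omega
  obtain ⟨i, hi, hmin⟩ : ∃ i, bead p i < t ∧ ∀ k < i, t < bead p k :=
    ⟨Nat.find hbelow, Nat.find_spec hbelow, fun k hk =>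
      (not_lt.1 (Nat.find_min hbelow hk)).lt_of_ne fun h => ht ⟨k, h.symm⟩⟩
  refine ⟨(t - p.1 + i).toNat, ?_⟩
  have hcol := lt_rowLen_iff_lt_colLen p.2 i (t - p.1 + i).toNat
  have hcol' := lt_rowLen_iff_lt_colLen p.2 (i - 1) (t - p.1 + i).toNat
  have hmin' := hmin (i - 1)
  unfold bead at hi hmin'
  unfold gap
  omega

theorem hookLength_eq_bead_sub_gap {p : ℤ × YoungDiagram} {i j : ℕ} (h : (i, j) ∈ p.2) :
    (hookLength p.2 i j : ℤ) = bead p i - gap p j := by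
  have hrow := YoungDiagram.mem_iff_lt_rowLen.1 h
  have hcol := YoungDiagram.mem_iff_lt_colLen.1 h
  unfold hookLength bead gap
  omega

theorem isLCore_iff_beadSet {ℓ : ℕ} (hℓ : 0 < ℓ) (p : ℤ × YoungDiagram) :
    IsLCore ℓ p.2 ↔ ∀ s ∈ beadSet p, s - ℓ ∈ beadSet p := by
  constructor
  · rintro hcore _ ⟨i, rfl⟩
    by_contra hs
    obtain ⟨j, hj⟩ := exists_gap_eq hs
    have hij : (i, j) ∈ p.2 := (gap_lt_bead_iff p i j).1 (by omega)
    have hhook := hookLength_eq_bead_sub_gap hij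
    exact hcore (i, j) hij (by dsimp only; omega)
  · rintro hclosed ⟨i, j⟩ hij hℓ'
    have hhook := hookLength_eq_bead_sub_gap ((p.2.mem_cells _).1 hij)
    refine gap_notMem_beadSet p j ?_
    convert hclosed _ ⟨i, rfl⟩ using 1
    dsimp only at hℓ'
    omega

theorem strictAnti_apply_succ_of_sub_one_mem_range {b : ℕ → ℤ} (hb : StrictAnti b) {i : ℕ}
    (h : b i - 1 ∈ Set.range b) : b (i + 1) = b i - 1 := by
  obtain ⟨k, hk⟩ := h
  have hik : i < k := hb.lt_iff_gt.1 (by omega)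
  have h1 : b k ≤ b (i + 1) := hb.antitone hik
  have h2 := hb (Nat.lt_add_one i)
  omega

theorem snd_eq_bot_iff_beadSet (p : ℤ × YoungDiagram) :
    p.2 = ⊥ ↔ ∀ s ∈ beadSet p, s - 1 ∈ beadSet p := by
  constructor
  · rintro h _ ⟨i, rfl⟩
    refine ⟨i + 1, ?_⟩
    simp only [bead, h, rowLen_bot]
    push_cast
    ring
  · intro h
    have hstep (i : ℕ) : p.2.rowLen (i + 1) = p.2.rowLen i := by
      have := strictAnti_apply_succ_of_sub_one_mem_range (bead_strictAnti p) (h _ ⟨i, rfl⟩)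
      unfold bead at this
      omega
    have hconst (i : ℕ) : p.2.rowLen i = p.2.rowLen 0 := by
      induction i with
      | zero => rfl
      | succ i ih => rw [hstep, ih]
    refine rowLen_injective (funext fun i => ?_)
    rw [rowLen_bot, hconst, ← hconst (p.2.colLen 0), rowLen_eq_zero_of_colLen_zero_le le_rfl]

end Beads

section MayaDiagrams

theorem beadSet_eq_union (p : ℤ × YoungDiagram) :
    beadSet p =
      ↑((Finset.range (p.2.colLen 0)).image (bead p)) ∪ Set.Iio (p.1 - p.2.colLen 0) := by
  ext s
  simp only [beadSet, Finset.coe_image, Finset.coe_range, Set.mem_union, Set.mem_Iio]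
  constructor
  · rintro ⟨i, rfl⟩
    rcases lt_or_ge i (p.2.colLen 0) with hi | hi
    · exact Or.inl ⟨i, hi, rfl⟩
    · exact Or.inr (by rw [bead_of_colLen_zero_le hi]; omega)
  · rintro (⟨i, -, rfl⟩ | hs)
    · exact ⟨i, rfl⟩
    · exact ⟨(p.1 - 1 - s).toNat, by rw [bead_of_colLen_zero_le (by omega)]; omega⟩

theorem isMaya_Iio (c : ℤ) : IsMaya (Set.Iio c) :=
  ⟨bddAbove_Iio, by simpa only [Set.compl_Iio] using bddBelow_Ici⟩

theorem isMaya_beadSet (p : ℤ × YoungDiagram) : IsMaya (beadSet p) := by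
  rw [beadSet_eq_union]
  exact ⟨(Finset.bddAbove _).union bddAbove_Iio,
    (isMaya_Iio _).2.mono (Set.compl_subset_compl.2 Set.subset_union_right)⟩

theorem beadSet_injective : Function.Injective beadSet := by
  intro p q h
  have hbead : bead p = bead q :=
    (StrictMono.range_inj (bead_strictAnti p).dual_right (bead_strictAnti q).dual_right).1 h
  have hcharge : p.1 = q.1 := by
    have := congrFun hbead (max (p.2.colLen 0) (q.2.colLen 0))
    rw [bead_of_colLen_zero_le (le_max_left _ _), bead_of_colLen_zero_le (le_max_right _ _)] at this
    omega
  refine Prod.ext hcharge (rowLen_injective (funext fun i => ?_))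
  have := congrFun hbead i
  unfold bead at this
  omega

theorem exists_strictAnti_range_eq {S : Set ℤ} (habove : BddAbove S) (hbelow : ¬BddBelow S) :
    ∃ b : ℕ → ℤ, StrictAnti b ∧ Set.range b = S := by
  obtain ⟨M, hM⟩ := habove
  let T : Set ℕ := {k | M - k ∈ S}
  have hT : T.Infinite := by
    refine Set.infinite_of_forall_exists_gt fun k => ?_
    obtain ⟨s, hs, hsk⟩ := not_bddBelow_iff.1 hbelow (M - k)
    have hk : M - ((M - s).toNat : ℤ) = s := by omega
    exact ⟨(M - s).toNat, show M - ((M - s).toNat : ℤ) ∈ S by rwa [hk], by omega⟩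
  classical
  have := hT.to_subtype
  refine ⟨fun i => M - Nat.orderEmbeddingOfSet T i, fun i k hik => ?_, ?_⟩
  · have := (Nat.orderEmbeddingOfSet T).strictMono hik
    dsimp only
    omega
  · rw [Set.range_comp' (fun k : ℕ => M - (k : ℤ)), Nat.orderEmbeddingOfSet_range]
    ext s
    constructor
    · rintro ⟨k, hk, rfl⟩
      exact hk
    · intro hs
      have hsM := hM hs
      have hk : M - ((M - s).toNat : ℤ) = s := by omega
      exact ⟨(M - s).toNat, show M - ((M - s).toNat : ℤ) ∈ S by rwa [hk], hk⟩

theorem IsMaya.not_bddBelow {S : Set ℤ} (hS : IsMaya S) : ¬BddBelow S := fun h =>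
  not_bddBelow_univ (Set.union_compl_self S ▸ h.union hS.2)

theorem exists_beadSet_eq_range {b : ℕ → ℤ} (hb : StrictAnti b) (hlow : BddBelow (Set.range b)ᶜ) :
    ∃ p, beadSet p = Set.range b := by
  obtain ⟨M, hM⟩ := hlow
  have hanti : Antitone fun i => b i + i := antitone_nat_of_succ_le fun i => by
    have := hb (Nat.lt_add_one i)
    push_cast
    omega
  obtain ⟨n, hn⟩ : ∃ n, ∀ i, n ≤ i → b i + i = b n + n := by
    refine ⟨(b 0 - M + 1).toNat, fun i hi => ?_⟩
    induction i, hi using Nat.le_induction with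
    | base => rfl
    | succ i hi ih =>
      have hmem : b i - 1 ∈ Set.range b := by
        by_contra h
        have := hM h
        have := hanti (Nat.zero_le i)
        simp only at this
        omega
      rw [strictAnti_apply_succ_of_sub_one_mem_range hb hmem, ← ih]
      push_cast
      ring
  have hge (i : ℕ) : b n + n ≤ b i + i := by
    rw [← hn _ (le_max_left n i)]
    exact hanti (le_max_right n i)
  obtain ⟨Y, hY⟩ := exists_rowLen_eq (f := fun i => (b i + i - (b n + n)).toNat)
    (fun i k hik => Int.toNat_le_toNat (sub_le_sub_right (hanti hik) _)) (n := n) (by simp)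
  refine ⟨(b n + n + 1, Y), congrArg Set.range (funext fun i => ?_)⟩
  have := hge i
  simp only [bead, hY]
  omega

/-- Charged partitions correspond to Maya diagrams. -/
noncomputable def mayaEquiv : ℤ × YoungDiagram ≃ {S : Set ℤ // IsMaya S} :=
  Equiv.ofBijective (fun p => ⟨beadSet p, isMaya_beadSet p⟩)
    ⟨fun _ _ h => beadSet_injective (congrArg Subtype.val h), fun ⟨S, hS⟩ => by
      obtain ⟨b, hb, rfl⟩ := exists_strictAnti_range_eq hS.1 hS.not_bddBelow
      obtain ⟨p, hp⟩ := exists_beadSet_eq_range hb hS.2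
      exact ⟨p, Subtype.ext hp⟩⟩

end MayaDiagrams

section Weights

/-- The indicator of `S` minus that of the negative integers: beads in nonnegative
positions count `1`, negative positions without a bead count `-1`. -/
noncomputable def excess (S : Set ℤ) (s : ℤ) : ℤ :=
  S.indicator 1 s - (Set.Iio 0).indicator 1 s

/-- The sum of `f` over the beads of a Maya diagram `S`, normalised by subtracting its sum
over the negative integers. On the Maya diagram of the partition `λ` with charge `c`, the
functions `1` and `2 * s + 1` have weights `c` and `2 * |λ| + c ^ 2`. -/
noncomputable def weight (f : ℤ → ℤ) (S : Set ℤ) : ℤ := ∑ᶠ s, f s * excess S s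

theorem excess_eq_zero_iff {S : Set ℤ} {s : ℤ} : excess S s = 0 ↔ (s ∈ S ↔ s < 0) := by
  by_cases hS : s ∈ S <;> by_cases hs : s < 0 <;> simp [excess, hS, hs]

theorem isMaya_iff_hasFiniteSupport {S : Set ℤ} : IsMaya S ↔ (excess S).HasFiniteSupport := by
  constructor
  · rintro ⟨habove, hbelow⟩
    refine BddBelow.finite_of_bddAbove ((hbelow.union bddBelow_Ici).mono (t := Sᶜ ∪ Set.Ici 0) ?_)
      ((habove.union bddAbove_Iio).mono (t := S ∪ Set.Iio 0) ?_) <;>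
    · intro s hs
      have := mt excess_eq_zero_iff.2 hs
      by_cases hS : s ∈ S <;> simp_all
  · intro h
    refine ⟨(h.bddAbove.union bddAbove_Iio).mono (t := _ ∪ Set.Iio 0) ?_,
      (h.bddBelow.union bddBelow_Ici).mono (t := _ ∪ Set.Ici 0) ?_⟩ <;>
    · intro s hs
      by_cases h0 : s < 0 <;> simp_all [excess_eq_zero_iff]

theorem IsMaya.hasFiniteSupport_mul_excess {S : Set ℤ} (hS : IsMaya S) (f : ℤ → ℤ) :
    (fun s => f s * excess S s).HasFiniteSupport :=
  (isMaya_iff_hasFiniteSupport.1 hS).mul_right f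

theorem IsMaya.weight_linear {S : Set ℤ} (hS : IsMaya S) (a b : ℤ) (f g : ℤ → ℤ) :
    weight (fun s => a * f s + b * g s) S = a * weight f S + b * weight g S := by
  have hfin (c : ℤ) (h : ℤ → ℤ) : (fun s => c * (h s * excess S s)).HasFiniteSupport :=
    (hS.hasFiniteSupport_mul_excess h).mul_right _
  simp_rw [weight, add_mul, mul_assoc]
  rw [finsum_add_distrib (hfin a f) (hfin b g), mul_finsum, mul_finsum]

theorem weight_union (f : ℤ → ℤ) {A : Finset ℤ} {S : Set ℤ} (hS : IsMaya S)
    (hAS : Disjoint (A : Set ℤ) S) : weight f (A ∪ S) = ∑ a ∈ A, f a + weight f S := by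
  have hexcess (s : ℤ) :
      f s * excess (A ∪ S) s = (A : Set ℤ).indicator f s + f s * excess S s := by
    have hA : (A : Set ℤ).indicator f s = f s * (A : Set ℤ).indicator 1 s := by
      rw [← Set.indicator_mul_right, ← Pi.mul_def, mul_one]
    rw [excess, Set.indicator_union_of_disjoint hAS, excess, hA]
    ring
  have hfin : (A : Set ℤ).indicator f |>.HasFiniteSupport :=
    A.finite_toSet.subset Set.support_indicator_subset
  simp_rw [weight, hexcess]
  rw [finsum_add_distrib hfin (hS.hasFiniteSupport_mul_excess f),
    ← finsum_mem_def, finsum_mem_coe_finset]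

theorem weight_Iio_zero (f : ℤ → ℤ) : weight f (Set.Iio 0) = 0 := by
  simp [weight, excess]

theorem weight_Iio_add_one (f : ℤ → ℤ) (c : ℤ) :
    weight f (Set.Iio (c + 1)) = f c + weight f (Set.Iio c) := by
  have hset : Set.Iio (c + 1) = (({c} : Finset ℤ) : Set ℤ) ∪ Set.Iio c := by
    ext s
    simp only [Set.mem_Iio, Finset.coe_singleton, Set.mem_union, Set.mem_singleton_iff]
    omega
  rw [hset, weight_union f (isMaya_Iio c) (by simp), Finset.sum_singleton]

theorem weight_Iio_of_sub_eq {f F : ℤ → ℤ} (hF : ∀ s, F (s + 1) - F s = f s) (c : ℤ) :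
    weight f (Set.Iio c) = F c - F 0 := by
  induction c with
  | zero => rw [weight_Iio_zero, sub_self]
  | succ c ih => rw [weight_Iio_add_one, ih, ← hF]; ring
  | pred c ih =>
    have hweight := weight_Iio_add_one f (-c - 1)
    have hpred := hF (-c - 1)
    rw [sub_add_cancel] at hweight hpred
    linarith

theorem weight_beadSet (f : ℤ → ℤ) (p : ℤ × YoungDiagram) :
    weight f (beadSet p) = ∑ i ∈ Finset.range (p.2.colLen 0), f (bead p i) +
      weight f (Set.Iio (p.1 - p.2.colLen 0)) := by
  have hdisj : Disjoint (((Finset.range (p.2.colLen 0)).image (bead p) : Finset ℤ) : Set ℤ)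
      (Set.Iio (p.1 - p.2.colLen 0)) := by
    rw [Set.disjoint_left]
    simp only [Finset.coe_image, Finset.coe_range]
    rintro _ ⟨i, hi, rfl⟩
    rw [Set.mem_Iio] at hi ⊢
    unfold bead
    omega
  rw [beadSet_eq_union, weight_union f (isMaya_Iio _) hdisj,
    Finset.sum_image (bead_strictAnti p).injective.injOn]

theorem weight_one_beadSet (p : ℤ × YoungDiagram) : weight 1 (beadSet p) = p.1 := by
  rw [weight_beadSet, weight_Iio_of_sub_eq (f := 1) (F := id) fun s => add_sub_cancel_left s 1]
  simp

theorem weight_odd_beadSet (p : ℤ × YoungDiagram) :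
    weight (fun s => 2 * s + 1) (beadSet p) = 2 * p.2.card + p.1 ^ 2 := by
  have hsum (n : ℕ) : ∑ i ∈ Finset.range n, (2 * bead p i + 1) =
      2 * (∑ i ∈ Finset.range n, p.2.rowLen i : ℕ) + p.1 ^ 2 - (p.1 - n) ^ 2 := by
    induction n with
    | zero => simp
    | succ n ih =>
      rw [Finset.sum_range_succ, ih, Finset.sum_range_succ, bead]
      push_cast
      ring
  rw [weight_beadSet, weight_Iio_of_sub_eq (F := (· ^ 2)) fun s => by ring, hsum,
    ← card_eq_sum_rowLen]
  ring

end Weights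

section FiniteSupport

theorem hasFiniteSupport_comp_equiv_iff {α β M : Type*} [Zero M] (e : α ≃ β) {f : β → M} :
    (fun a => f (e a)).HasFiniteSupport ↔ f.HasFiniteSupport := by
  refine ⟨fun h => ?_, fun h => h.comp_of_injective e.injective⟩
  simpa only [Function.comp_def, Equiv.apply_symm_apply] using h.comp_of_injective e.symm.injective

theorem hasFiniteSupport_prod_iff {ι α M : Type*} [Finite ι] [Zero M] {f : ι × α → M} :
    f.HasFiniteSupport ↔ ∀ i, (fun a => f (i, a)).HasFiniteSupport := by
  refine ⟨fun h i => h.comp_of_injective (Prod.mk_right_injective i), fun h => ?_⟩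
  refine (Set.finite_iUnion fun i => (h i).image (Prod.mk i)).subset ?_
  rintro ⟨i, a⟩ hia
  exact Set.mem_iUnion.2 ⟨i, a, hia, rfl⟩

theorem finsum_prod_eq_sum_finsum {ι α M : Type*} [Fintype ι] [AddCommMonoid M] {f : ι × α → M}
    (hf : f.HasFiniteSupport) : ∑ᶠ x, f x = ∑ i, ∑ᶠ a, f (i, a) := by
  rw [finsum_curry f hf, finsum_eq_sum_of_fintype]

end FiniteSupport

section Abacus

variable (ℓ : ℕ) [NeZero ℓ]

/-- The position `ℓ * m + j` of the line `ℤ`, as the `m`-th position of the `j`-th runner of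
the `ℓ`-abacus. -/
def position : Fin ℓ × ℤ ≃ ℤ := (Equiv.prodComm _ _).trans (Int.divModEquiv ℓ).symm

/-- The positions occupied by the set `S` on the `j`-th runner of the `ℓ`-abacus. -/
def runner (S : Set ℤ) (j : Fin ℓ) : Set ℤ := {m | position ℓ (j, m) ∈ S}

variable {ℓ}

theorem position_apply (j : Fin ℓ) (m : ℤ) : position ℓ (j, m) = ℓ * m + (j : ℕ) := by
  simp [position, Int.divModEquiv, mul_comm]

theorem position_sub_one (j : Fin ℓ) (m : ℤ) :
    position ℓ (j, m - 1) = position ℓ (j, m) - ℓ := by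
  rw [position_apply, position_apply]
  ring

theorem position_neg_iff (j : Fin ℓ) (m : ℤ) : position ℓ (j, m) < 0 ↔ m < 0 := by
  have := j.isLt
  rw [position_apply]
  constructor <;> intro h <;> nlinarith

theorem excess_runner (S : Set ℤ) (j : Fin ℓ) (m : ℤ) :
    excess (runner ℓ S j) m = excess S (position ℓ (j, m)) := by
  classical
  have hmem : m ∈ runner ℓ S j ↔ position ℓ (j, m) ∈ S := Iff.rfl
  simp only [excess, Set.indicator_apply, hmem, Set.mem_Iio, position_neg_iff, Pi.one_apply]

theorem isMaya_iff_runner {S : Set ℤ} : IsMaya S ↔ ∀ j, IsMaya (runner ℓ S j) := by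
  have hrunner (j : Fin ℓ) : excess (runner ℓ S j) = fun m => excess S (position ℓ (j, m)) :=
    funext (excess_runner S j)
  simp_rw [isMaya_iff_hasFiniteSupport, hrunner]
  rw [← hasFiniteSupport_prod_iff (f := fun x => excess S (position ℓ x)),
    hasFiniteSupport_comp_equiv_iff]

theorem weight_eq_sum_runner (f : ℤ → ℤ) {S : Set ℤ} (hS : IsMaya S) :
    weight f S = ∑ j, weight (fun m => f (position ℓ (j, m))) (runner ℓ S j) := by
  have hfin := (hS.hasFiniteSupport_mul_excess f).comp_of_injective (position ℓ).injective
  simp_rw [weight, excess_runner]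
  rw [← finsum_comp_equiv (position ℓ)]
  exact finsum_prod_eq_sum_finsum hfin

variable (ℓ) in
/-- A set of integers amounts to the family of its runners. -/
def runnerEquiv : Set ℤ ≃ (Fin ℓ → Set ℤ) where
  toFun := runner ℓ
  invFun R := {s | ((position ℓ).symm s).2 ∈ R ((position ℓ).symm s).1}
  left_inv S := by ext s; simp [runner]
  right_inv R := by ext j m; simp [runner]

variable (ℓ) in
/-- The `ℓ`-abacus: the Maya diagram of a charged partition is cut into its `ℓ` runners, each
of which is the Maya diagram of a charged partition. -/
noncomputable def abacus : ℤ × YoungDiagram ≃ (Fin ℓ → ℤ × YoungDiagram) :=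
  mayaEquiv.trans <| ((runnerEquiv ℓ).subtypeEquiv fun _ => isMaya_iff_runner).trans <|
    Equiv.subtypePiEquivPi.trans <| Equiv.piCongrRight fun _ => mayaEquiv.symm

theorem beadSet_abacus (p : ℤ × YoungDiagram) (j : Fin ℓ) :
    beadSet (abacus ℓ p j) = runner ℓ (beadSet p) j :=
  congrArg Subtype.val (mayaEquiv.apply_symm_apply _)

theorem weight_beadSet_eq_sum_abacus (f : ℤ → ℤ) (p : ℤ × YoungDiagram) :
    weight f (beadSet p) =
      ∑ j, weight (fun m => f (position ℓ (j, m))) (beadSet (abacus ℓ p j)) := by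
  simp_rw [beadSet_abacus, ← weight_eq_sum_runner f (isMaya_beadSet p)]

theorem sum_abacus_charge (p : ℤ × YoungDiagram) : ∑ j, (abacus ℓ p j).1 = p.1 := by
  simp_rw [← weight_one_beadSet]
  exact (weight_beadSet_eq_sum_abacus 1 p).symm

theorem two_mul_card_add_charge_sq (p : ℤ × YoungDiagram) :
    2 * (p.2.card : ℤ) + p.1 ^ 2 = ∑ j : Fin ℓ, (ℓ * (2 * (abacus ℓ p j).2.card +
      (abacus ℓ p j).1 ^ 2) + (2 * (j : ℕ) + 1 - ℓ) * (abacus ℓ p j).1) := by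
  rw [← weight_odd_beadSet, weight_beadSet_eq_sum_abacus (ℓ := ℓ)]
  refine Finset.sum_congr rfl fun j _ => ?_
  rw [← weight_odd_beadSet, ← weight_one_beadSet (abacus ℓ p j),
    ← (isMaya_beadSet (abacus ℓ p j)).weight_linear]
  congr 1
  ext m
  rw [position_apply, Pi.one_apply]
  ring

theorem isLCore_iff_abacus (p : ℤ × YoungDiagram) :
    IsLCore ℓ p.2 ↔ ∀ j, (abacus ℓ p j).2 = ⊥ := by
  rw [isLCore_iff_beadSet (Nat.pos_of_neZero ℓ), ← (position ℓ).forall_congr_right, Prod.forall]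
  simp_rw [snd_eq_bot_iff_beadSet, beadSet_abacus, ← position_sub_one]
  rfl

theorem exists_abacus_eq {q : Fin ℓ → ℤ × YoungDiagram} (hq : ∑ j, (q j).1 = 0) :
    ∃ Y, abacus ℓ (0, Y) = q := by
  have hcharge := sum_abacus_charge (ℓ := ℓ) ((abacus ℓ).symm q)
  rw [Equiv.apply_symm_apply, hq] at hcharge
  exact ⟨((abacus ℓ).symm q).2, (Equiv.eq_symm_apply _).1 (Prod.ext hcharge rfl)⟩

end Abacus

section CoreAndQuotient

variable (ℓ : ℕ) [NeZero ℓ] (Y : YoungDiagram)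

/-- The `ℓ`-quotient of a partition: the partitions on the runners of its `ℓ`-abacus, at
charge `0`. -/
noncomputable def lQuotient (j : Fin ℓ) : YoungDiagram := (abacus ℓ (0, Y) j).2

/-- The `ℓ`-core of a partition, obtained by pushing down all beads on the runners of its
`ℓ`-abacus. -/
noncomputable def lCore : YoungDiagram := ((abacus ℓ).symm fun j => ((abacus ℓ (0, Y) j).1, ⊥)).2

theorem abacus_lCore (j : Fin ℓ) : abacus ℓ (0, lCore ℓ Y) j = ((abacus ℓ (0, Y) j).1, ⊥) := by
  obtain ⟨K, hK⟩ := exists_abacus_eq (q := fun j => ((abacus ℓ (0, Y) j).1, ⊥))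
    (sum_abacus_charge (0, Y))
  rw [lCore, ← hK, Equiv.symm_apply_apply, hK]

theorem isLCore_lCore : IsLCore ℓ (lCore ℓ Y) :=
  (isLCore_iff_abacus (0, lCore ℓ Y)).2 fun j => by rw [abacus_lCore]

theorem card_eq_card_lCore_add :
    Y.card = (lCore ℓ Y).card + ℓ * ∑ j, (lQuotient ℓ Y j).card := by
  have hY := two_mul_card_add_charge_sq (ℓ := ℓ) (0, Y)
  have hcore := two_mul_card_add_charge_sq (ℓ := ℓ) (0, lCore ℓ Y)
  simp only [abacus_lCore, card_eq_zero_iff.2 rfl, ne_eq, OfNat.ofNat_ne_zero, not_false_eq_true,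
    zero_pow, add_zero] at hY hcore
  have hdouble : 2 * (Y.card : ℤ) =
      2 * (lCore ℓ Y).card + 2 * (ℓ * ∑ j, ((lQuotient ℓ Y j).card : ℤ)) := by
    rw [hY, hcore, Finset.mul_sum, Finset.mul_sum, ← Finset.sum_add_distrib]
    refine Finset.sum_congr rfl fun j _ => ?_
    rw [lQuotient]
    push_cast
    ring
  zify
  linarith

variable {Y} in
theorem eq_of_lCore_eq_of_lQuotient_eq {Z : YoungDiagram} (hcore : lCore ℓ Y = lCore ℓ Z)
    (hquot : lQuotient ℓ Y = lQuotient ℓ Z) : Y = Z := by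
  have h : abacus ℓ (0, Y) = abacus ℓ (0, Z) := by
    refine funext fun j => Prod.ext ?_ (congrFun hquot j)
    have hY := abacus_lCore ℓ Y j
    rw [hcore, abacus_lCore] at hY
    exact (congrArg Prod.fst hY).symm
  exact congrArg Prod.snd ((abacus ℓ).injective h)

theorem exists_lCore_eq_lQuotient_eq {K : YoungDiagram} (hK : IsLCore ℓ K)
    (Q : Fin ℓ → YoungDiagram) : ∃ Y, lCore ℓ Y = K ∧ lQuotient ℓ Y = Q := by
  obtain ⟨Y, hY⟩ := exists_abacus_eq (q := fun j => ((abacus ℓ (0, K) j).1, Q j))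
    (sum_abacus_charge (0, K))
  have hK' : abacus ℓ (0, K) = fun j => ((abacus ℓ (0, Y) j).1, ⊥) :=
    funext fun j => Prod.ext (by rw [hY]) ((isLCore_iff_abacus (0, K)).1 hK j)
  refine ⟨Y, ?_, funext fun j => ?_⟩
  · rw [lCore, ← hK', Equiv.symm_apply_apply]
  · rw [lQuotient, hY]

end CoreAndQuotient

section Words

theorem finsum_list {α M : Type*} [Fintype α] [AddCommMonoid M] {f : List α → M}
    (hf : f.HasFiniteSupport) : ∑ᶠ t, f t = f [] + ∑ a, ∑ᶠ t, f (a :: t) := by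
  let e : Option (α × List α) ≃ List α :=
    { toFun := fun o => o.elim [] fun x => x.1 :: x.2
      invFun := fun
        | [] => none
        | a :: t => some (a, t)
      left_inv := by rintro (_ | _) <;> rfl
      right_inv := by rintro (_ | _) <;> rfl }
  have hcons := (hf.comp_of_injective e.injective).comp_of_injective (Option.some_injective _)
  calc ∑ᶠ t, f t = ∑ᶠ o, (f ∘ e) o := (finsum_comp_equiv e).symm
    _ = f [] + ∑ᶠ x : α × List α, f (x.1 :: x.2) := finsum_option hcons
    _ = f [] + ∑ a, ∑ᶠ t, f (a :: t) := congrArg (f [] + ·) (finsum_prod_eq_sum_finsum hcons)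

/-- The nodes at depth `d` of the `ℓ`-ary tree, that is the words of length `d` in the
alphabet `Fin ℓ`, numbered by the integers less than `ℓ ^ d`. -/
def wordEquiv (ℓ : ℕ) : List (Fin ℓ) ≃ (d : ℕ) × Fin (ℓ ^ d) :=
  List.equivSigmaTuple.trans (Equiv.sigmaCongrRight fun _ => finFunctionFinEquiv)

end Words

section CoreTower

variable (ℓ : ℕ) [NeZero ℓ]

/-- The `ℓ`-core tower of a partition: the core at the word `t` is that of the partition
reached from `Y` by successively taking the components of the quotients indexed by `t`. -/
noncomputable def coreTower : YoungDiagram → List (Fin ℓ) → YoungDiagram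
  | Y, [] => lCore ℓ Y
  | Y, a :: t => coreTower (lQuotient ℓ Y a) t

variable {ℓ}

theorem isLCore_coreTower (Y : YoungDiagram) (t : List (Fin ℓ)) : IsLCore ℓ (coreTower ℓ Y t) := by
  induction t generalizing Y with
  | nil => exact isLCore_lCore ℓ Y
  | cons a _ ih => exact ih _

theorem mul_card_lQuotient_le (Y : YoungDiagram) (a : Fin ℓ) :
    ℓ * (lQuotient ℓ Y a).card ≤ Y.card := by
  have hsum := Finset.single_le_sum (fun j _ => Nat.zero_le (lQuotient ℓ Y j).card)
    (Finset.mem_univ a)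
  have hmul := Nat.mul_le_mul_left ℓ hsum
  have hcard := card_eq_card_lCore_add ℓ Y
  omega

theorem pow_length_mul_card_coreTower_le (Y : YoungDiagram) (t : List (Fin ℓ)) :
    ℓ ^ t.length * (coreTower ℓ Y t).card ≤ Y.card := by
  induction t generalizing Y with
  | nil =>
    rw [List.length_nil, pow_zero, one_mul, coreTower, card_eq_card_lCore_add ℓ Y]
    exact Nat.le_add_right _ _
  | cons a t ih =>
    calc ℓ ^ (a :: t).length * (coreTower ℓ Y (a :: t)).card
        = ℓ * (ℓ ^ t.length * (coreTower ℓ (lQuotient ℓ Y a) t).card) := by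
          rw [List.length_cons, pow_succ', mul_assoc, coreTower]
      _ ≤ ℓ * (lQuotient ℓ Y a).card := Nat.mul_le_mul_left ℓ (ih _)
      _ ≤ Y.card := mul_card_lQuotient_le Y a

theorem coreTower_bot (t : List (Fin ℓ)) : coreTower ℓ ⊥ t = ⊥ := by
  have h := pow_length_mul_card_coreTower_le ⊥ t
  rw [card_eq_zero_iff.2 rfl, Nat.le_zero, mul_eq_zero] at h
  exact card_eq_zero_iff.1 (h.resolve_left (pow_ne_zero _ (NeZero.ne ℓ)))

theorem hasFiniteSupport_card_coreTower (hℓ : 1 < ℓ) (Y : YoungDiagram) :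
    (fun t => (coreTower ℓ Y t).card).HasFiniteSupport := by
  refine (List.finite_length_le (Fin ℓ) Y.card).subset fun t ht => ?_
  change t.length ≤ Y.card
  calc t.length ≤ ℓ ^ t.length := (Nat.lt_pow_self hℓ).le
    _ ≤ ℓ ^ t.length * (coreTower ℓ Y t).card := Nat.le_mul_of_pos_right _ (Nat.pos_of_ne_zero ht)
    _ ≤ Y.card := pow_length_mul_card_coreTower_le Y t

theorem lQuotient_induction (hℓ : 1 < ℓ) {P : YoungDiagram → Prop} (bot : P ⊥)
    (step : ∀ Y, (∀ j, P (lQuotient ℓ Y j)) → P Y) (Y : YoungDiagram) : P Y := by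
  induction hn : Y.card using Nat.strong_induction_on generalizing Y with
  | _ n ih =>
    rcases Nat.eq_zero_or_pos n with rfl | hpos
    · rwa [card_eq_zero_iff.1 hn]
    · refine step Y fun j => ih _ ?_ _ rfl
      have hle := mul_card_lQuotient_le Y j
      nlinarith

theorem finsum_pow_length_mul_card_coreTower (hℓ : 1 < ℓ) (Y : YoungDiagram) :
    ∑ᶠ t, ℓ ^ t.length * (coreTower ℓ Y t).card = Y.card := by
  induction Y using lQuotient_induction hℓ with
  | bot => simp_rw [coreTower_bot, card_eq_zero_iff.2, mul_zero, finsum_zero]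
  | step Y ih =>
    have hfin : (fun t => ℓ ^ t.length * (coreTower ℓ Y t).card).HasFiniteSupport :=
      (hasFiniteSupport_card_coreTower hℓ Y).mul_right _
    rw [finsum_list hfin, card_eq_card_lCore_add ℓ Y, Finset.mul_sum]
    simp only [List.length_nil, pow_zero, one_mul, List.length_cons, pow_succ', mul_assoc,
      coreTower, ← mul_finsum, ih]

theorem coreTower_injective (hℓ : 1 < ℓ) : Function.Injective (coreTower ℓ) := by
  intro Y
  induction Y using lQuotient_induction hℓ with
  | bot =>
    intro Z h
    rw [eq_comm, ← card_eq_zero_iff, ← finsum_pow_length_mul_card_coreTower hℓ, ← h,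
      finsum_pow_length_mul_card_coreTower hℓ, card_eq_zero_iff]
  | step Y ih =>
    intro Z h
    exact eq_of_lCore_eq_of_lQuotient_eq ℓ (congrFun h [])
      (funext fun a => ih a (funext fun t => congrFun h (a :: t)))

theorem exists_coreTower_eq_of_length {T : List (Fin ℓ) → YoungDiagram}
    (hT : ∀ t, IsLCore ℓ (T t)) {d : ℕ} (hd : ∀ t, d ≤ t.length → T t = ⊥) :
    ∃ Y, coreTower ℓ Y = T := by
  induction d generalizing T with
  | zero => exact ⟨⊥, funext fun t => (coreTower_bot t).trans (hd t t.length.zero_le).symm⟩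
  | succ d ih =>
    choose Q hQ using fun a => ih (fun t => hT (a :: t)) fun t ht => hd (a :: t) (by simpa using ht)
    obtain ⟨Y, hcore, hquot⟩ := exists_lCore_eq_lQuotient_eq ℓ (hT []) Q
    refine ⟨Y, funext fun t => ?_⟩
    cases t with
    | nil => exact hcore
    | cons a t => rw [coreTower, hquot, hQ]

theorem exists_coreTower_eq {T : List (Fin ℓ) → YoungDiagram} (hT : ∀ t, IsLCore ℓ (T t))
    (hfin : (fun t => (T t).card).HasFiniteSupport) : ∃ Y, coreTower ℓ Y = T := by
  obtain ⟨d, hd⟩ := (hfin.image List.length).bddAbove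
  refine exists_coreTower_eq_of_length hT (d := d + 1) fun t ht => ?_
  by_contra h
  have : t.length ≤ d := hd ⟨t, mt card_eq_zero_iff.1 h, rfl⟩
  omega

end CoreTower

section CoreTowersOfTuples

variable (ℓ e : ℕ)

/-- The function `(i, d, j) ↦ κ^d_{i,j}` formed by the `ℓ`-core towers of the components of
an `e`-tuple of partitions. -/
noncomputable def coreTowers [NeZero ℓ] (lam : ZMod e → YoungDiagram) (x : WIndex ℓ e) :
    YoungDiagram :=
  coreTower ℓ (lam x.1) ((wordEquiv ℓ).symm x.2)

variable {ℓ e}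

theorem hasFiniteSupport_windex_iff [NeZero e] {M : Type*} [Zero M] {f : WIndex ℓ e → M} :
    f.HasFiniteSupport ↔ ∀ i, (fun t => f (i, wordEquiv ℓ t)).HasFiniteSupport := by
  rw [hasFiniteSupport_prod_iff]
  exact forall_congr' fun i => (hasFiniteSupport_comp_equiv_iff (wordEquiv ℓ)).symm

theorem finsum_windex {M : Type*} [AddCommMonoid M] {f : WIndex ℓ e → M}
    (hf : f.HasFiniteSupport) : ∑ᶠ x, f x = ∑ᶠ i, ∑ᶠ t, f (i, wordEquiv ℓ t) := by
  simp_rw [finsum_curry f hf, ← finsum_comp_equiv (wordEquiv ℓ)]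

variable [NeZero ℓ]

theorem coreTowers_wordEquiv (lam : ZMod e → YoungDiagram) (i : ZMod e) (t : List (Fin ℓ)) :
    coreTowers ℓ e lam (i, wordEquiv ℓ t) = coreTower ℓ (lam i) t := by
  rw [coreTowers, Equiv.symm_apply_apply]

theorem coreTowers_injective (hℓ : 1 < ℓ) : Function.Injective (coreTowers ℓ e) := by
  refine fun lam mu h => funext fun i => coreTower_injective hℓ (funext fun t => ?_)
  rw [← coreTowers_wordEquiv, h, coreTowers_wordEquiv]

variable [NeZero e]

theorem hasFiniteSupport_card_coreTowers (hℓ : 1 < ℓ) (lam : ZMod e → YoungDiagram) :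
    (fun x => (coreTowers ℓ e lam x).card).HasFiniteSupport := by
  simp_rw [hasFiniteSupport_windex_iff, coreTowers_wordEquiv]
  exact fun i => hasFiniteSupport_card_coreTower hℓ (lam i)

theorem finsum_pow_mul_card_coreTowers (hℓ : 1 < ℓ) (lam : ZMod e → YoungDiagram) :
    ∑ᶠ x : WIndex ℓ e, ℓ ^ x.2.1 * (coreTowers ℓ e lam x).card = ∑ᶠ i, (lam i).card := by
  have hfin : (fun x : WIndex ℓ e => ℓ ^ x.2.1 * (coreTowers ℓ e lam x).card).HasFiniteSupport :=
    (hasFiniteSupport_card_coreTowers hℓ lam).mul_right _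
  rw [finsum_windex hfin]
  simp_rw [coreTowers_wordEquiv]
  exact finsum_congr fun i => finsum_pow_length_mul_card_coreTower hℓ (lam i)

theorem exists_coreTowers_eq {w : WIndex ℓ e → YoungDiagram} (hw : ∀ x, IsLCore ℓ (w x))
    (hfin : (fun x => (w x).card).HasFiniteSupport) : ∃ lam, coreTowers ℓ e lam = w := by
  choose lam hlam using fun i => exists_coreTower_eq (fun t => hw (i, wordEquiv ℓ t))
    (hasFiniteSupport_windex_iff.1 hfin i)
  refine ⟨lam, funext fun ⟨i, x⟩ => ?_⟩
  obtain ⟨t, rfl⟩ := (wordEquiv ℓ).surjective x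
  rw [coreTowers_wordEquiv, hlam]

theorem bijOn_coreTowers (hℓ : 1 < ℓ) (n : ℕ) :
    Set.BijOn (coreTowers ℓ e) (Lset e n) (Wset ℓ e n) := by
  refine ⟨fun lam hlam => ⟨fun x => isLCore_coreTower _ _, hasFiniteSupport_card_coreTowers hℓ lam,
    (finsum_pow_mul_card_coreTowers hℓ lam).trans hlam⟩, (coreTowers_injective hℓ).injOn, ?_⟩
  rintro w ⟨hcore, hfin, hsum⟩
  obtain ⟨lam, rfl⟩ := exists_coreTowers_eq hcore hfin
  exact ⟨lam, (finsum_pow_mul_card_coreTowers hℓ lam).symm.trans hsum, rfl⟩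

end CoreTowersOfTuples

section Equivariance

theorem comp_mem_Lset {e n : ℕ} (σ : Equiv.Perm (ZMod e)) {lam : ZMod e → YoungDiagram}
    (h : lam ∈ Lset e n) : (fun i => lam (σ i)) ∈ Lset e n :=
  (finsum_comp_equiv σ (f := fun i => (lam i).card)).trans h

theorem comp_mem_Wset {ℓ e n : ℕ} (σ : Equiv.Perm (ZMod e)) {w : WIndex ℓ e → YoungDiagram}
    (h : w ∈ Wset ℓ e n) : (fun x => w (σ x.1, x.2)) ∈ Wset ℓ e n := by
  let τ : WIndex ℓ e ≃ WIndex ℓ e := σ.prodCongr (Equiv.refl _)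
  obtain ⟨hcore, hfin, hsum⟩ := h
  exact ⟨fun x => hcore (τ x), hfin.preimage τ.injective.injOn,
    (finsum_comp_equiv τ (f := fun x => ℓ ^ x.2.1 * (w x).card)).trans hsum⟩

theorem Wset_equivariant_equiv_Lset_general {ℓ e : ℕ} (hℓ : 1 < ℓ) (he : 0 < e) (n : ℕ) :
    (∀ (σ : Equiv.Perm (ZMod e)), ∀ lam ∈ Lset e n, (fun i => lam (σ i)) ∈ Lset e n) ∧
    (∀ (σ : Equiv.Perm (ZMod e)), ∀ w ∈ Wset ℓ e n, (fun x => w (σ x.1, x.2)) ∈ Wset ℓ e n) ∧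
    ∃ Φ : Lset e n ≃ Wset ℓ e n, ∀ (σ : Equiv.Perm (ZMod e)) (x y : Lset e n),
      (y : ZMod e → YoungDiagram) = (fun i => x.1 (σ i)) →
        (Φ y : WIndex ℓ e → YoungDiagram) = fun z => (Φ x).1 (σ z.1, z.2) := by
  have : NeZero ℓ := ⟨by omega⟩
  have : NeZero e := ⟨he.ne'⟩
  refine ⟨fun σ lam => comp_mem_Lset σ, fun σ w => comp_mem_Wset σ,
    (bijOn_coreTowers hℓ n).equiv, fun σ x y hxy => ?_⟩
  change coreTowers ℓ e y = fun z => coreTowers ℓ e x (σ z.1, z.2)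
  rw [hxy]
  rfl

end Equivariance

/-- Fix a prime `ℓ` and positive integers `e, r, n` with `r ∣ e`.  The set `W` of
functions `w : I → {ℓ-cores}` with `∑_{(i,d,j)} ℓ^d |w(i,d,j)| = n` and the set `L` of
`e`-tuples of partitions of total size `n` are isomorphic as `ℤ/r`-sets, where `ℤ/r`
acts on both by translating the `ℤ/e`-coordinate. -/
theorem Wset_equivariant_equiv_Lset (ℓ : ℕ) (hℓ : ℓ.Prime)
    (e r n : ℕ) (he : 0 < e) (hr : 0 < r) (hre : r ∣ e) :
    (∀ (k : ZMod r) (lam : ZMod e → YoungDiagram),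
      lam ∈ Lset e n → shiftL e r k lam ∈ Lset e n) ∧
    (∀ (k : ZMod r) (w : WIndex ℓ e → YoungDiagram),
      w ∈ Wset ℓ e n → shiftW ℓ e r k w ∈ Wset ℓ e n) ∧
    ∃ Φ : Lset e n ≃ Wset ℓ e n,
      ∀ (k : ZMod r) (x y : Lset e n), (y : ZMod e → YoungDiagram) = shiftL e r k x →
        (Φ y : WIndex ℓ e → YoungDiagram) = shiftW ℓ e r k (Φ x) :=
  have ⟨hL, hW, Φ, hΦ⟩ := Wset_equivariant_equiv_Lset_general hℓ.one_lt he n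
  let σ (k : ZMod r) := Equiv.addRight (embed e r k)
  ⟨fun k => hL (σ k), fun k => hW (σ k), Φ, fun k => hΦ (σ k)⟩
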